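/- Let R be a local unique factorization domain and A an m×m matrix over R whose determinant is not a zero divisor. Then ann(coker A) is a principal ideal. -/

import Mathlib

/-- The annihilator of the cokernel of (the linear map defined by) a matrix. -/
def Matrix.annCoker {R : Type*} [CommRing R] {m n : Type*} [Fintype n] [Fintype m]
    (A : Matrix m n R) : Ideal R :=
  Module.annihilator R ((m → R) ⧸ LinearMap.range A.mulVecLin)

/-! For a square matrix `A` whose determinant `d` is not a zero divisor, the equation
`A * B = r • 1` is equivalent to `d • B = r • A.adjugate`, so `ann (coker A)` consists of the `r`
for which `d` divides `r * A.adjugate i j` for all `i` and `j`. Over a GCD domain this means that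
`d` divides `r * g`, where `g` is the gcd of the entries of the adjugate, that is, that
`d / gcd d g` divides `r`. If `d = 0`, then `A * B = r • 1` forces a power of `r`, hence `r` itself,
to vanish. -/

open scoped nonZeroDivisors

theorem exists_forall_dvd_mul_iff_dvd {α : Type*} [CommMonoidWithZero α] [GCDMonoid α] (d x : α) :
    ∃ c, ∀ r, d ∣ r * x ↔ c ∣ r := by
  obtain ⟨c, hc⟩ := gcd_dvd_left d x
  rcases eq_or_ne (gcd d x) 0 with h | h
  · exact ⟨1, fun r ↦ by simp [((gcd_eq_zero_iff d x).mp h).2]⟩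
  · refine ⟨c, fun r ↦ ?_⟩
    calc d ∣ r * x ↔ d ∣ r * gcd d x := dvd_mul_gcd_iff_dvd_mul.symm
      _ ↔ gcd d x * c ∣ gcd d x * r := by rw [← hc, mul_comm r]
      _ ↔ c ∣ r := mul_dvd_mul_iff_left h

theorem isPrincipal_colon_span_singleton {R : Type*} [CommRing R] [IsGCDMonoid R] (d : R)
    {S : Set R} (hS : S.Finite) : ((Ideal.span {d}).colon S).IsPrincipal := by
  obtain ⟨_⟩ : Nonempty (NormalizedGCDMonoid R) := inferInstance
  lift S to Finset R using hS
  obtain ⟨c, hc⟩ := exists_forall_dvd_mul_iff_dvd d (S.gcd id)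
  refine ⟨c, Submodule.ext fun r ↦ ?_⟩
  calc r ∈ (Ideal.span {d}).colon (S : Set R) ↔ ∀ s ∈ S, d ∣ r * s := by
        simp only [Submodule.mem_colon, SetLike.mem_coe, smul_eq_mul, Ideal.mem_span_singleton]
    _ ↔ d ∣ S.gcd fun s ↦ r * id s := Finset.dvd_gcd_iff.symm
    _ ↔ d ∣ r * S.gcd id := (Finset.gcd_mul_left' S id r).dvd_iff_dvd_right
    _ ↔ c ∣ r := hc r
    _ ↔ r ∈ Submodule.span R {c} := Ideal.mem_span_singleton.symm

section AnnCoker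

variable {R m n : Type*} [CommRing R] [Fintype m] [Fintype n]

theorem mem_annCoker_iff_forall_mem_range {A : Matrix m n R} {r : R} :
    r ∈ A.annCoker ↔ ∀ v, r • v ∈ LinearMap.range A.mulVecLin := by
  simp only [Matrix.annCoker, Submodule.annihilator_quotient, Submodule.mem_colon, Set.mem_univ,
    true_imp_iff]

variable [DecidableEq m]

theorem mem_annCoker_iff_exists_mul_eq_smul_one {A : Matrix m n R} {r : R} :
    r ∈ A.annCoker ↔ ∃ B : Matrix n m R, A * B = r • (1 : Matrix m m R) := by
  rw [mem_annCoker_iff_forall_mem_range]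
  constructor
  · intro h
    choose w hw using fun j ↦ h (Pi.single j 1)
    refine ⟨(Matrix.of w).transpose, Matrix.ext_of_mulVec_single fun j ↦ ?_⟩
    calc (A * (Matrix.of w).transpose).mulVec (Pi.single j 1) = A.mulVec (w j) := by
          rw [← Matrix.mulVec_mulVec, Matrix.mulVec_single_one]; rfl
      _ = (r • (1 : Matrix m m R)).mulVec (Pi.single j 1) := by
          rw [Matrix.smul_mulVec, Matrix.one_mulVec]; exact hw j
  · rintro ⟨B, hB⟩ v
    exact ⟨B.mulVec v, by
      rw [Matrix.mulVecLin_apply, Matrix.mulVec_mulVec, hB, Matrix.smul_mulVec, Matrix.one_mulVec]⟩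

theorem mul_eq_smul_one_iff_det_smul_eq_smul_adjugate {A : Matrix m m R} (hA : A.det ∈ R⁰)
    {B : Matrix m m R} {r : R} :
    A * B = r • (1 : Matrix m m R) ↔ A.det • B = r • A.adjugate := by
  constructor <;> intro h
  · calc A.det • B = A.adjugate * (A * B) := by
          rw [← Matrix.mul_assoc, Matrix.adjugate_mul, Matrix.smul_mul, Matrix.one_mul]
      _ = r • A.adjugate := by rw [h, Matrix.mul_smul, Matrix.mul_one]
  · have h_det : A.det • (A * B) = A.det • r • (1 : Matrix m m R) := by
      rw [← Matrix.mul_smul, h, Matrix.mul_smul, Matrix.mul_adjugate, smul_comm]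
    ext i j
    exact (mul_cancel_left_mem_nonZeroDivisors hA).mp (congr_fun₂ h_det i j)

theorem annCoker_eq_colon_adjugate {A : Matrix m m R} (hA : A.det ∈ R⁰) :
    A.annCoker =
      (Ideal.span {A.det}).colon (Set.range fun p : m × m ↦ A.adjugate p.1 p.2) := by
  ext r
  calc r ∈ A.annCoker ↔ ∃ B : Matrix m m R, A.det • B = r • A.adjugate := by
        simp only [mem_annCoker_iff_exists_mul_eq_smul_one,
          mul_eq_smul_one_iff_det_smul_eq_smul_adjugate hA]
    _ ↔ ∀ i j, A.det ∣ r * A.adjugate i j := by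
        refine ⟨fun ⟨B, hB⟩ i j ↦ ⟨B i j, (congr_fun₂ hB i j).symm⟩, fun h ↦ ?_⟩
        choose B hB using h
        exact ⟨Matrix.of B, Matrix.ext fun i j ↦ (hB i j).symm⟩
    _ ↔ r ∈ (Ideal.span {A.det}).colon (Set.range fun p : m × m ↦ A.adjugate p.1 p.2) := by
        simp only [Submodule.mem_colon, Set.forall_mem_range, Prod.forall, smul_eq_mul,
          Ideal.mem_span_singleton]

theorem det_dvd_pow_card_of_mem_annCoker {A : Matrix m m R} {r : R} (hr : r ∈ A.annCoker) :
    A.det ∣ r ^ Fintype.card m := by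
  obtain ⟨B, hB⟩ := mem_annCoker_iff_exists_mul_eq_smul_one.mp hr
  exact ⟨B.det, by rw [← Matrix.det_mul, hB, Matrix.det_smul, Matrix.det_one, mul_one]⟩

theorem annCoker_eq_bot_of_det_eq_zero [IsReduced R] {A : Matrix m m R} (hA : A.det = 0) :
    A.annCoker = ⊥ := by
  refine (Submodule.eq_bot_iff _).mpr fun r hr ↦ eq_zero_of_pow_eq_zero (n := Fintype.card m) ?_
  exact zero_dvd_iff.mp (hA ▸ det_dvd_pow_card_of_mem_annCoker hr)

end AnnCoker

theorem stmt8_general {R n : Type*} [CommRing R] [IsGCDMonoid R] [Fintype n] (A : Matrix n n R) :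
    A.annCoker.IsPrincipal := by
  classical
  have : IsCancelMulZero R := IsGCDMonoid.isCancelMulZero R
  by_cases hA : A.det = 0
  · rw [annCoker_eq_bot_of_det_eq_zero hA]
    exact bot_isPrincipal
  · rw [annCoker_eq_colon_adjugate (mem_nonZeroDivisors_of_ne_zero hA)]
    exact isPrincipal_colon_span_singleton _ (Set.finite_range _)

theorem stmt8 {R : Type*} [CommRing R] [IsLocalRing R] [IsDomain R]
    [UniqueFactorizationMonoid R] {m : ℕ} (A : Matrix (Fin m) (Fin m) R)
    (hdet : A.det ∈ nonZeroDivisors R) :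
    A.annCoker.IsPrincipal :=
  stmt8_general A
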